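/- (Stability of the implicit characteristic finite difference scheme.) Let C_b ≥ 0 and let U⁰, U¹, …, U^M be vectors in ℝ^{N+1} and Δt_1,…,Δt_M > 0 timesteps such that for each n the following hold: (i) x_i + r x_i Δt_{n+1} ≤ x_{i+1} for every interior i; (ii) the boundary equations u_0^{n+1}(1 + rΔt_{n+1}) = u_0^n and |u_N^{n+1}| ≤ C_b hold; (iii) for each interior index i there exists σ_i ∈ {σ̲, σ̄} such that (1 + Δt_{n+1}(α_i(σ_i)+β_i(σ_i)+r)) u_i^{n+1} = ū_i^n + Δt_{n+1} α_i(σ_i) u_{i−1}^{n+1} + Δt_{n+1} β_i(σ_i) u_{i+1}^{n+1}, where ū_i^n = λ_i u_i^n + (1−λ_i) u_{i+1}^n with λ_i = (x_{i+1} − x_i − r x_i Δt_{n+1})/(x_{i+1} − x_i) ∈ [0,1]. Then for every n, max_{0≤i≤N} |u_i^n| ≤ max( max_{0≤i≤N} |u_i^0|, C_b ). -/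

import Mathlib

/-- `α_i(σ) = σ²x_i²/((x_i − x_{i−1})(x_{i+1} − x_{i−1}))`. -/
noncomputable def alphaC (x : ℕ → ℝ) (s : ℝ) (i : ℕ) : ℝ :=
  s ^ 2 * (x i) ^ 2 / ((x i - x (i - 1)) * (x (i + 1) - x (i - 1)))

/-- `β_i(σ) = σ²x_i²/((x_{i+1} − x_i)(x_{i+1} − x_{i−1}))`. -/
noncomputable def betaC (x : ℕ → ℝ) (s : ℝ) (i : ℕ) : ℝ :=
  s ^ 2 * (x i) ^ 2 / ((x (i + 1) - x i) * (x (i + 1) - x (i - 1)))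

/-!
Discrete maximum principle. Let `|u^{n+1}|` attain its maximum `m` at an interior node `k`, and let
`K` bound the previous time level and the boundary data. The scheme equates
`(1 + Δt (α + β + r)) u_k` with a convex combination of old values plus the nonnegative multiples
`Δt α`, `Δt β` of new values of modulus at most `m`, so
`(1 + Δt (α + β + r)) m ≤ K + Δt (α + β) m`, which leaves `m ≤ K`. If `k` is a boundary node,
`m ≤ K` is read off the boundary equations.
-/

section MaximumPrinciple

variable {E : Type*} [NormedAddCommGroup E] [NormedSpace ℝ E]

lemma norm_le_norm_of_smul_eq_add_smul_add_smul {a b c : ℝ} (ha : 0 ≤ a) (hb : 0 ≤ b)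
    (hc : 1 + a + b ≤ c) {f l m q : E} (hl : ‖l‖ ≤ ‖m‖) (hq : ‖q‖ ≤ ‖m‖)
    (h : c • m = f + a • l + b • q) : ‖m‖ ≤ ‖f‖ := by
  have key : (1 + a + b) * ‖m‖ ≤ ‖f‖ + a * ‖m‖ + b * ‖m‖ := calc
    (1 + a + b) * ‖m‖ ≤ c * ‖m‖ := by gcongr
    _ = ‖f + a • l + b • q‖ := by rw [← h, norm_smul_of_nonneg (by linarith)]
    _ ≤ ‖f‖ + ‖a • l‖ + ‖b • q‖ := norm_add₃_le
    _ = ‖f‖ + a * ‖l‖ + b * ‖q‖ := by rw [norm_smul_of_nonneg ha, norm_smul_of_nonneg hb]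
    _ ≤ ‖f‖ + a * ‖m‖ + b * ‖m‖ := by gcongr
  linarith

theorem norm_le_of_three_point_scheme {N : ℕ} {a b c : ℕ → ℝ} {f v : ℕ → E} {K : ℝ}
    (ha : ∀ i, 0 < i → i < N → 0 ≤ a i) (hb : ∀ i, 0 < i → i < N → 0 ≤ b i)
    (hc : ∀ i, 0 < i → i < N → 1 + a i + b i ≤ c i)
    (hf : ∀ i, 0 < i → i < N → ‖f i‖ ≤ K) (hv0 : ‖v 0‖ ≤ K) (hvN : ‖v N‖ ≤ K)
    (h : ∀ i, 0 < i → i < N → c i • v i = f i + a i • v (i - 1) + b i • v (i + 1)) :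
    ∀ i ≤ N, ‖v i‖ ≤ K := by
  obtain ⟨k, hk, hmax⟩ : ∃ k ≤ N, ∀ i ≤ N, ‖v i‖ ≤ ‖v k‖ := by
    simpa using (Finset.Iic N).exists_max_image (‖v ·‖) ⟨0, by simp⟩
  suffices hkK : ‖v k‖ ≤ K from fun i hi => (hmax i hi).trans hkK
  obtain rfl | hk0 := k.eq_zero_or_pos
  · exact hv0
  obtain rfl | hkN := hk.eq_or_lt
  · exact hvN
  calc ‖v k‖ ≤ ‖f k‖ :=
        norm_le_norm_of_smul_eq_add_smul_add_smul (ha k hk0 hkN) (hb k hk0 hkN) (hc k hk0 hkN)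
          (hmax (k - 1) (by lia)) (hmax (k + 1) hkN) (h k hk0 hkN)
    _ ≤ K := hf k hk0 hkN

end MaximumPrinciple

section Coefficients

variable {x : ℕ → ℝ} {i : ℕ}

lemma alphaC_nonneg (s : ℝ) (hl : x (i - 1) ≤ x i) (hr : x i ≤ x (i + 1)) : 0 ≤ alphaC x s i :=
  div_nonneg (by positivity) (mul_nonneg (sub_nonneg.2 hl) (sub_nonneg.2 (hl.trans hr)))

lemma betaC_nonneg (s : ℝ) (hl : x (i - 1) ≤ x i) (hr : x i ≤ x (i + 1)) : 0 ≤ betaC x s i :=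
  div_nonneg (by positivity) (mul_nonneg (sub_nonneg.2 hr) (sub_nonneg.2 (hl.trans hr)))

end Coefficients

section Scheme

variable {E : Type*} [NormedAddCommGroup E] [NormedSpace ℝ E] {N : ℕ} {x : ℕ → ℝ} {r : ℝ}

theorem norm_le_of_implicit_characteristic_step (hx : ∀ i < N, x i < x (i + 1)) (hr : 0 ≤ r)
    {δ K : ℝ} (hδ : 0 ≤ δ) {σ w : ℕ → ℝ} {u v : ℕ → E} (hu : ∀ i ≤ N, ‖u i‖ ≤ K)
    (hv0 : (1 + r * δ) • v 0 = u 0) (hvN : ‖v N‖ ≤ K)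
    (hw : ∀ i, 0 < i → i < N → w i ∈ Set.Icc (0 : ℝ) 1)
    (hv : ∀ i, 0 < i → i < N →
      (1 + δ * (alphaC x (σ i) i + betaC x (σ i) i + r)) • v i =
        w i • u i + (1 - w i) • u (i + 1)
          + (δ * alphaC x (σ i) i) • v (i - 1) + (δ * betaC x (σ i) i) • v (i + 1)) :
    ∀ i ≤ N, ‖v i‖ ≤ K := by
  have hδr : 0 ≤ r * δ := mul_nonneg hr hδ
  have hpred : ∀ i, 0 < i → i < N → x (i - 1) ≤ x i := fun i hi hiN => by
    simpa [Nat.sub_add_cancel hi] using (hx (i - 1) (by lia)).le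
  refine norm_le_of_three_point_scheme
    (fun i hi hiN => mul_nonneg hδ (alphaC_nonneg (σ i) (hpred i hi hiN) (hx i hiN).le))
    (fun i hi hiN => mul_nonneg hδ (betaC_nonneg (σ i) (hpred i hi hiN) (hx i hiN).le))
    (fun i _ _ => by linarith) (fun i hi hiN => ?interpolant) ?left hvN hv
  case interpolant =>
    obtain ⟨hw0, hw1⟩ := hw i hi hiN
    simpa using convex_closedBall (0 : E) K (by simpa using hu i hiN.le)
      (by simpa using hu (i + 1) hiN) hw0 (sub_nonneg.2 hw1) (add_sub_cancel (w i) 1)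
  case left =>
    calc ‖v 0‖ ≤ (1 + r * δ) * ‖v 0‖ := le_mul_of_one_le_left (norm_nonneg _) (by linarith)
      _ = ‖u 0‖ := by rw [← hv0, norm_smul_of_nonneg (by linarith)]
      _ ≤ K := hu 0 N.zero_le

theorem stability_implicit_characteristic_scheme_general {M : ℕ} (hx : ∀ i < N, x i < x (i + 1))
    (hr : 0 ≤ r) {C_b : ℝ} {Δt : ℕ → ℝ} (hΔt : ∀ n < M, 0 ≤ Δt (n + 1))
    {σ w : ℕ → ℕ → ℝ} {u : ℕ → ℕ → E}
    (hbd0 : ∀ n < M, (1 + r * Δt (n + 1)) • u (n + 1) 0 = u n 0)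
    (hbdN : ∀ n < M, ‖u (n + 1) N‖ ≤ C_b)
    (hw : ∀ n < M, ∀ i, 0 < i → i < N → w n i ∈ Set.Icc (0 : ℝ) 1)
    (hint : ∀ n < M, ∀ i, 0 < i → i < N →
      (1 + Δt (n + 1) * (alphaC x (σ n i) i + betaC x (σ n i) i + r)) • u (n + 1) i =
        w n i • u n i + (1 - w n i) • u n (i + 1)
          + (Δt (n + 1) * alphaC x (σ n i) i) • u (n + 1) (i - 1)
          + (Δt (n + 1) * betaC x (σ n i) i) • u (n + 1) (i + 1)) :
    ∀ n ≤ M, ∀ i ≤ N, ‖u n i‖ ≤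
      max ((Finset.range (N + 1)).sup' Finset.nonempty_range_add_one fun j => ‖u 0 j‖) C_b := by
  intro n hn
  induction n with
  | zero =>
    exact fun i hi => le_max_of_le_left <|
      Finset.le_sup' (fun j => ‖u 0 j‖) (Finset.mem_range_succ_iff.2 hi)
  | succ n ih =>
    exact norm_le_of_implicit_characteristic_step hx hr (hΔt n hn) (ih (by lia)) (hbd0 n hn)
      (le_max_of_le_right (hbdN n hn)) (hw n hn) (hint n hn)

end Scheme

/-- Stability of the implicit characteristic finite difference scheme:
`max_{0≤i≤N} |u_i^n| ≤ max(max_{0≤i≤N} |u_i^0|, C_b)` for every time level `n ≤ M`. -/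
theorem stability_implicit_characteristic_scheme
    (N M : ℕ) (hN : 2 ≤ N) (x : ℕ → ℝ) (hx0 : x 0 = 0)
    (hxmono : ∀ i < N, x i < x (i + 1))
    (σlo σhi r C_b : ℝ) (hσlo : 0 ≤ σlo) (hσ : σlo < σhi) (hr : 0 ≤ r) (hCb : 0 ≤ C_b)
    (Δt : ℕ → ℝ) (hΔt : ∀ n, 1 ≤ n → n ≤ M → 0 < Δt n)
    (u : ℕ → ℕ → ℝ)
    -- (i) the characteristic foot stays in the cell: `x_i + r x_i Δt_{n+1} ≤ x_{i+1}`
    (hfoot : ∀ n < M, ∀ i, 1 ≤ i → i ≤ N - 1 → x i + r * x i * Δt (n + 1) ≤ x (i + 1))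
    -- (ii) boundary equations
    (hbd0 : ∀ n < M, u (n + 1) 0 * (1 + r * Δt (n + 1)) = u n 0)
    (hbdN : ∀ n < M, |u (n + 1) N| ≤ C_b)
    -- (iii) interior equations with some `σ_i ∈ {σ̲, σ̄}` and linear interpolation weight
    -- `λ_i = (x_{i+1} − x_i − r x_i Δt_{n+1})/(x_{i+1} − x_i) ∈ [0,1]`
    (hint : ∀ n < M, ∀ i, 1 ≤ i → i ≤ N - 1 →
      (x (i + 1) - x i - r * x i * Δt (n + 1)) / (x (i + 1) - x i) ∈ Set.Icc (0 : ℝ) 1 ∧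
      ∃ s ∈ ({σlo, σhi} : Set ℝ),
        (1 + Δt (n + 1) * (alphaC x s i + betaC x s i + r)) * u (n + 1) i =
          ((x (i + 1) - x i - r * x i * Δt (n + 1)) / (x (i + 1) - x i)) * u n i
            + (1 - (x (i + 1) - x i - r * x i * Δt (n + 1)) / (x (i + 1) - x i)) * u n (i + 1)
            + Δt (n + 1) * alphaC x s i * u (n + 1) (i - 1)
            + Δt (n + 1) * betaC x s i * u (n + 1) (i + 1)) :
    ∀ n ≤ M, ∀ i ≤ N, |u n i| ≤
      max ((Finset.range (N + 1)).sup'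
            (Finset.nonempty_range_iff.mpr (Nat.succ_ne_zero N)) fun j => |u 0 j|)
        C_b := by
  choose! hw σ _ hu using hint
  exact stability_implicit_characteristic_scheme_general hxmono hr
    (fun n hn => (hΔt (n + 1) (by lia) hn).le) (fun n hn => (mul_comm _ _).trans (hbd0 n hn)) hbdN
    (fun n hn i hi hiN => hw n hn i hi (by lia)) (fun n hn i hi hiN => hu n hn i hi (by lia))
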